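/- Let a, b, c be pairwise coprime positive integers with c² = a² + b² + ab, and let m be a positive integer such that the equilateral triangle with side length m·ab tiles into m²·ab congruent copies of the triangle with side lengths (a, b, c). Then the triangle with side lengths (m·b·c, m·a·(a+2b), m·c·(a+b)) tiles into m²·(a+2b)·(a+b) congruent copies of the triangle with side lengths (a, b, c). -/

import Mathlib

noncomputable section

abbrev Plane := EuclideanSpace ℝ (Fin 2)

/-- The point (x, y) in the Euclidean plane. -/
def pt (x y : ℝ) : Plane := (WithLp.equiv 2 (Fin 2 → ℝ)).symm ![x, y]

/-- `Δ` is a triangle with side lengths `(p, q, r)`: the convex hull of points `P, Q, R`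
with `dist Q R = p`, `dist P R = q`, `dist P Q = r`. -/
def IsTriangle (p q r : ℝ) (Δ : Set Plane) : Prop :=
  ∃ P Q R : Plane, dist Q R = p ∧ dist P R = q ∧ dist P Q = r ∧
    Δ = convexHull ℝ {P, Q, R}

/-- `S` tiles into `N` congruent copies of the `(p, q, r)` triangle: there are isometries
`f 1, …, f N` of the plane and a triangle `Δ` with side lengths `(p, q, r)` such that
`S` is the union of the `f i '' Δ` and their interiors are pairwise disjoint. -/
def TilesInto (S : Set Plane) (N : ℕ) (p q r : ℝ) : Prop :=
  ∃ (f : Fin N → Plane ≃ᵢ Plane) (Δ : Set Plane),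
    IsTriangle p q r Δ ∧
    S = ⋃ i, f i '' Δ ∧
    ∀ i j : Fin N, i ≠ j → interior (f i '' Δ) ∩ interior (f j '' Δ) = ∅

/-- The equilateral triangle with side length `X`. -/
def EquilateralTri (X : ℝ) : Set Plane :=
  convexHull ℝ {pt 0 0, pt X 0, pt (X/2) (X * Real.sqrt 3 / 2)}

/-
Let `PQR` be the triangle with `QR = m b c`, `PR = m a (a + 2 b)`, `PQ = m c (a + b)`, and let `E`
on `PR` satisfy `ER = m a b`. The identity `c² = a² + b² + a b` says that the angle of the tile
opposite `c` is `120°`, and Stewart's theorem accordingly turns `PQE` into a copy of the tile scaled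
by the integer `m (a + b)`. On `EQ` take `F` with `EF = m a b`; now `EFR` is the equilateral
triangle tiled by hypothesis and `FRQ` is a copy of the tile scaled by `m b`. A copy of the tile
scaled by an integer `k` splits into `k²` tiles along a triangular grid, so the three pieces use
`m² (a + b)² + m² a b + m² b² = m² (a + 2 b) (a + b)` tiles.
-/

open Set AffineMap
open scoped RealInnerProductSpace Congruent

section Congruence

variable {M V ι : Type*} [AddCommGroup M] [Module ℝ M] [NormedAddCommGroup V]
  [InnerProductSpace ℝ V] [FiniteDimensional ℝ V]

lemma exists_linearIsometryEquiv_of_norm_eq (f g : M →ₗ[ℝ] V) (h : ∀ x, ‖f x‖ = ‖g x‖) :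
    ∃ L : V ≃ₗᵢ[ℝ] V, ∀ x, L (f x) = g x := by
  have hker : f.ker ≤ g.ker := fun x hx ↦ by
    rw [LinearMap.mem_ker, ← norm_eq_zero] at hx ⊢
    rw [← h, hx]
  let φ : f.range →ₗ[ℝ] V := f.ker.liftQ g hker ∘ₗ f.quotKerEquivRange.symm
  have hφ (x : M) : φ ⟨f x, x, rfl⟩ = g x :=
    (congrArg (f.ker.liftQ g hker) (f.quotKerEquivRange_symm_apply_image x _)).trans
      (f.ker.liftQ_apply g x)
  let Φ : f.range →ₗᵢ[ℝ] V := ⟨φ, by rintro ⟨_, x, rfl⟩; rw [hφ, ← h]; rfl⟩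
  exact ⟨Φ.extend.toLinearIsometryEquiv rfl, fun x ↦ (Φ.extend_apply ⟨f x, x, rfl⟩).trans (hφ x)⟩

lemma exists_linearIsometryEquiv_of_inner_eq {u v : ι → V}
    (h : ∀ i j, ⟪u i, u j⟫ = ⟪v i, v j⟫) : ∃ L : V ≃ₗᵢ[ℝ] V, ∀ i, L (u i) = v i := by
  obtain ⟨L, hL⟩ := exists_linearIsometryEquiv_of_norm_eq
    (Finsupp.linearCombination ℝ u) (Finsupp.linearCombination ℝ v) fun c ↦ by
      simp only [norm_eq_sqrt_real_inner, Finsupp.linearCombination_apply, Finsupp.sum_inner,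
        Finsupp.inner_sum, inner_smul_left, inner_smul_right, h]
  exact ⟨L, fun i ↦ by simpa using hL (Finsupp.single i 1)⟩

lemma exists_isometryEquiv_of_congruent {v w : ι → V} (h : v ≅ w) :
    ∃ f : V ≃ᵢ V, ∀ i, f (v i) = w i := by
  rcases isEmpty_or_nonempty ι with _ | ⟨⟨o⟩⟩
  · exact ⟨.refl V, isEmptyElim⟩
  obtain ⟨L, hL⟩ := exists_linearIsometryEquiv_of_inner_eq
    (u := fun i ↦ v i - v o) (v := fun i ↦ w i - w o) fun i j ↦ by
      simp only [real_inner_eq_norm_mul_self_add_norm_mul_self_sub_norm_sub_mul_self_div_two,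
        sub_sub_sub_cancel_right, ← dist_eq_norm, h.dist_eq]
  refine ⟨((IsometryEquiv.subRight (v o)).trans L.toIsometryEquiv).trans
    (IsometryEquiv.addRight (w o)), fun i ↦ ?_⟩
  simp [hL]

end Congruence

lemma image_convexHull_isometryEquiv {E F : Type*} [NormedAddCommGroup E] [NormedSpace ℝ E]
    [NormedAddCommGroup F] [NormedSpace ℝ F] (f : E ≃ᵢ F) (s : Set E) :
    f '' convexHull ℝ s = convexHull ℝ (f '' s) :=
  f.toRealAffineIsometryEquiv.toAffineEquiv.toAffineMap.image_convexHull s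

namespace IsTriangle

variable {p q r : ℝ} {Δ Δ' : Set Plane}

lemma swap (h : IsTriangle p q r Δ) : IsTriangle q p r Δ := by
  obtain ⟨P, Q, R, hp, hq, hr, rfl⟩ := h
  exact ⟨Q, P, R, hq, hp, dist_comm Q P ▸ hr, by rw [insert_comm]⟩

lemma rotate (h : IsTriangle p q r Δ) : IsTriangle q r p Δ := by
  obtain ⟨P, Q, R, hp, hq, hr, rfl⟩ := h
  exact ⟨Q, R, P, dist_comm P R ▸ hq, dist_comm P Q ▸ hr, hp, by
    rw [insert_comm, pair_comm]⟩

lemma image (h : IsTriangle p q r Δ) (f : Plane ≃ᵢ Plane) : IsTriangle p q r (f '' Δ) := by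
  obtain ⟨P, Q, R, hp, hq, hr, rfl⟩ := h
  refine ⟨f P, f Q, f R, by rw [f.dist_eq, hp], by rw [f.dist_eq, hq], by rw [f.dist_eq, hr], ?_⟩
  simp only [image_convexHull_isometryEquiv, image_insert_eq, image_singleton]

lemma exists_isometryEquiv (h : IsTriangle p q r Δ) (h' : IsTriangle p q r Δ') :
    ∃ f : Plane ≃ᵢ Plane, f '' Δ = Δ' := by
  obtain ⟨P, Q, R, hp, hq, hr, rfl⟩ := h
  obtain ⟨P', Q', R', hp', hq', hr', rfl⟩ := h'
  obtain ⟨f, hf⟩ := exists_isometryEquiv_of_congruent <|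
    EuclideanGeometry.side_side_side (hr.trans hr'.symm) (hp.trans hp'.symm)
      (by rw [dist_comm R, dist_comm R', hq, hq'])
  have hP : f P = P' := hf 0
  have hQ : f Q = Q' := hf 1
  have hR : f R = R' := hf 2
  refine ⟨f, ?_⟩
  simp only [image_convexHull_isometryEquiv, image_insert_eq, image_singleton, hP, hQ, hR]

end IsTriangle

namespace TilesInto

variable {p q r : ℝ} {S S' : Set Plane} {N N' : ℕ}

lemma of_iUnion {ι : Type*} [Fintype ι] {Δ : Set Plane} (hΔ : IsTriangle p q r Δ)
    (T : ι → Set Plane) (hT : ∀ i, IsTriangle p q r (T i))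
    (hd : Pairwise fun i j ↦ Disjoint (interior (T i)) (interior (T j))) :
    TilesInto (⋃ i, T i) (Fintype.card ι) p q r := by
  choose f hf using fun i ↦ hΔ.exists_isometryEquiv (hT i)
  let e := (Fintype.equivFin ι).symm
  refine ⟨fun i ↦ f (e i), Δ, hΔ, ?_, fun i j hij ↦ ?_⟩
  · simp only [hf, e.surjective.iUnion_comp T]
  · simpa only [hf] using (hd (e.injective.ne hij)).inter_eq

lemma exists_isTriangle (h : TilesInto S N p q r) : ∃ Δ, IsTriangle p q r Δ :=
  let ⟨_, Δ, hΔ, _⟩ := h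
  ⟨Δ, hΔ⟩

lemma exists_iUnion (h : TilesInto S N p q r) : ∃ T : Fin N → Set Plane,
    (∀ i, IsTriangle p q r (T i)) ∧ S = ⋃ i, T i ∧
      Pairwise fun i j ↦ Disjoint (interior (T i)) (interior (T j)) := by
  obtain ⟨f, Δ, hΔ, hS, hd⟩ := h
  exact ⟨fun i ↦ f i '' Δ, fun i ↦ hΔ.image (f i), hS,
    fun i j hij ↦ disjoint_iff_inter_eq_empty.2 (hd i j hij)⟩

lemma union (h : TilesInto S N p q r) (h' : TilesInto S' N' p q r)
    (hd : Disjoint (interior S) (interior S')) : TilesInto (S ∪ S') (N + N') p q r := by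
  obtain ⟨Δ, hΔ⟩ := h.exists_isTriangle
  obtain ⟨T, hT, rfl, hTd⟩ := h.exists_iUnion
  obtain ⟨T', hT', rfl, hTd'⟩ := h'.exists_iUnion
  have hTT' (i j) : Disjoint (interior (T i)) (interior (T' j)) :=
    hd.mono (interior_mono (subset_iUnion T i)) (interior_mono (subset_iUnion T' j))
  have := of_iUnion hΔ (Sum.elim T T') (Sum.forall.2 ⟨hT, hT'⟩) <| by
    rintro (i | i) (j | j) hij
    · exact hTd (ne_of_apply_ne Sum.inl hij)
    · exact hTT' i j
    · exact (hTT' j i).symm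
    · exact hTd' (ne_of_apply_ne Sum.inr hij)
  simpa [iUnion_sum] using this

lemma image (h : TilesInto S N p q r) (f : Plane ≃ᵢ Plane) : TilesInto (f '' S) N p q r := by
  obtain ⟨Δ, hΔ⟩ := h.exists_isTriangle
  obtain ⟨T, hT, rfl, hd⟩ := h.exists_iUnion
  have hint (A : Set Plane) : interior (f '' A) = f '' interior A :=
    (f.toHomeomorph.image_interior A).symm
  have := of_iUnion hΔ (fun i ↦ f '' T i) (fun i ↦ (hT i).image f) fun i j hij ↦ by
    simpa only [hint] using disjoint_image_of_injective f.injective (hd hij)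
  simpa only [image_iUnion, Fintype.card_fin] using this

lemma of_isTriangle {x y z : ℝ} (h : TilesInto S N p q r) (hS : IsTriangle x y z S)
    (hS' : IsTriangle x y z S') : TilesInto S' N p q r := by
  obtain ⟨f, rfl⟩ := hS.exists_isometryEquiv hS'
  exact h.image f

end TilesInto

section HalfSpace

variable {V : Type*} [NormedAddCommGroup V] [NormedSpace ℝ V]

lemma disjoint_interior_of_le_of_ge {f : V →L[ℝ] ℝ} (hf : f ≠ 0) {S T : Set V} {c : ℝ}
    (hS : ∀ x ∈ S, f x ≤ c) (hT : ∀ x ∈ T, c ≤ f x) : Disjoint (interior S) (interior T) := by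
  have hint (s : Set ℝ) : interior (f ⁻¹' s) = f ⁻¹' interior s :=
    ((f.isOpenMap_of_ne_zero hf).preimage_interior_eq_interior_preimage f.continuous s).symm
  have hlt : interior S ⊆ f ⁻¹' Iio c := by
    rw [← interior_Iic, ← hint]; exact interior_mono hS
  have hgt : interior T ⊆ f ⁻¹' Ioi c := by
    rw [← interior_Ici, ← hint]; exact interior_mono hT
  exact (Iio_disjoint_Ioi_same.preimage f).mono hlt hgt

variable [FiniteDimensional ℝ V]

lemma exists_ne_zero_apply_eq_zero_nonneg (hV : 1 < Module.finrank ℝ V) (w z : V) :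
    ∃ f : V →L[ℝ] ℝ, f ≠ 0 ∧ f w = 0 ∧ 0 ≤ f z := by
  have hw : ℝ ∙ w < ⊤ := Submodule.lt_top_of_finrank_lt_finrank <|
    (finrank_span_le_card {w}).trans_lt <| by simpa using hV
  obtain ⟨f, hf, hwf⟩ := Submodule.exists_le_ker_of_lt_top _ hw
  have hfw : f w = 0 := hwf (Submodule.mem_span_singleton_self w)
  have hf' : f.toContinuousLinearMap ≠ 0 := by simpa using hf
  rcases le_total 0 (f z) with hz | hz
  · exact ⟨f.toContinuousLinearMap, hf', hfw, hz⟩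
  · exact ⟨-f.toContinuousLinearMap, neg_ne_zero.2 hf', by simpa using hfw, by simpa using hz⟩

end HalfSpace

section Cevian

lemma segment_eq_union_of_wbtw {V : Type*} [AddCommGroup V] [Module ℝ V] {A C E : V}
    (hE : Wbtw ℝ A E C) : segment ℝ A C = segment ℝ A E ∪ segment ℝ E C := by
  ext x
  simp only [mem_union, mem_segment_iff_wbtw]
  refine ⟨fun hx ↦ ?_, fun hx ↦ hx.elim hE.trans_left hE.trans_right⟩
  have hEx : SameRay ℝ (E -ᵥ A) (x -ᵥ A) :=
    hE.sameRay_vsub_left.trans hx.sameRay_vsub_left.symm fun hCA ↦ .inl <| by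
      obtain rfl := vsub_eq_zero_iff_eq.1 hCA
      exact vsub_eq_zero_iff_eq.2 ((wbtw_self_iff ℝ).1 hE)
  rcases wbtw_total_of_sameRay_vsub_left hEx with h | h
  · exact .inr (hx.trans_left_right h)
  · exact .inl h

lemma convexHull_triple_eq_union_of_wbtw {V : Type*} [AddCommGroup V] [Module ℝ V]
    {A B C E : V} (hE : Wbtw ℝ A E C) :
    convexHull ℝ {A, B, C} = convexHull ℝ {A, B, E} ∪ convexHull ℝ {E, B, C} := by
  simp only [insert_comm _ B, convexHull_insert, insert_nonempty, convexHull_pair,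
    segment_eq_union_of_wbtw hE, convexJoin_union_right]

lemma disjoint_interior_convexHull_of_wbtw {V : Type*} [NormedAddCommGroup V] [NormedSpace ℝ V]
    [FiniteDimensional ℝ V] (hV : 1 < Module.finrank ℝ V) {A B C E : V} (hE : Wbtw ℝ A E C) :
    Disjoint (interior (convexHull ℝ {A, B, E})) (interior (convexHull ℝ {E, B, C})) := by
  obtain ⟨f, hf, hBE, hAC⟩ := exists_ne_zero_apply_eq_zero_nonneg hV (B - E) (C - A)
  replace hBE : f B = f E := by simpa [sub_eq_zero] using hBE
  replace hAC : f A ≤ f C := by simpa using hAC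
  obtain ⟨hAE, hEC⟩ : f E ∈ Icc (f A) (f C) := by
    rw [← segment_eq_Icc hAC, mem_segment_iff_wbtw]
    exact hE.map f.toLinearMap.toAffineMap
  refine disjoint_interior_of_le_of_ge hf (c := f E)
    (fun x hx ↦ convexHull_min ?_ (convex_halfSpace_le f.isLinear (f E)) hx)
    (fun x hx ↦ convexHull_min ?_ (convex_halfSpace_ge f.isLinear (f E)) hx)
  · simp [insert_subset_iff, hAE, hBE]
  · simp [insert_subset_iff, hEC, hBE]

lemma one_lt_finrank_plane : 1 < Module.finrank ℝ Plane := by simp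

lemma TilesInto.convexHull_of_wbtw {p q r : ℝ} {N N' : ℕ} {A B C E : Plane}
    (hE : Wbtw ℝ A E C) (h : TilesInto (convexHull ℝ {A, B, E}) N p q r)
    (h' : TilesInto (convexHull ℝ {E, B, C}) N' p q r) :
    TilesInto (convexHull ℝ {A, B, C}) (N + N') p q r := by
  rw [convexHull_triple_eq_union_of_wbtw hE]
  exact h.union h' (disjoint_interior_convexHull_of_wbtw one_lt_finrank_plane hE)

end Cevian

lemma exists_wbtw_dist_eq {V P : Type*} [NormedAddCommGroup V] [InnerProductSpace ℝ V]
    [MetricSpace P] [NormedAddTorsor V P] {A B C : P} {x y z : ℝ} (hx : 0 < x) (hy : 0 < y)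
    (hz : 0 ≤ z) (hAC : dist A C = x + y)
    (hStewart : dist B A ^ 2 * y + dist B C ^ 2 * x = (x + y) * (z ^ 2 + x * y)) :
    ∃ E, Wbtw ℝ A E C ∧ dist A E = x ∧ dist E C = y ∧ dist B E = z := by
  have hxy : 0 < x + y := by positivity
  have ht : 1 - x / (x + y) = y / (x + y) := by field_simp; ring
  let E := lineMap (k := ℝ) A C (x / (x + y))
  have hAE : dist A E = x := by
    rw [dist_left_lineMap, hAC, Real.norm_of_nonneg (by positivity), div_mul_cancel₀ _ hxy.ne']
  have hEC : dist E C = y := by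
    rw [dist_lineMap_right, hAC, ht, Real.norm_of_nonneg (by positivity),
      div_mul_cancel₀ _ hxy.ne']
  have hE : Sbtw ℝ A E C := sbtw_lineMap_iff.2
    ⟨dist_pos.1 (hAC ▸ hxy), by positivity, (div_lt_one hxy).2 (by linarith)⟩
  refine ⟨E, hE.wbtw, hAE, hEC, (sq_eq_sq₀ dist_nonneg hz).1 ?_⟩
  have := EuclideanGeometry.dist_sq_mul_dist_add_dist_sq_mul_dist B A C E hE.angle₁₂₃_eq_pi
  rw [dist_comm C E, hAE, hEC, hAC, hStewart] at this
  linarith [mul_left_cancel₀ hxy.ne' this]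

section TriangularGrid

lemma mem_convexHull_triple {V : Type*} [AddCommGroup V] [Module ℝ V] {A u v x : V} :
    x ∈ convexHull ℝ {A, A + u, A + v} ↔
      ∃ s t : ℝ, 0 ≤ s ∧ 0 ≤ t ∧ s + t ≤ 1 ∧ x = A + s • u + t • v := by
  constructor
  · rw [convexHull_insert (insert_nonempty _ _), convexHull_pair, convexJoin_singleton_left,
      mem_iUnion₂]
    simp only [segment_eq_image']
    rintro ⟨_, ⟨τ, ⟨hτ0, hτ1⟩, rfl⟩, σ, ⟨hσ0, hσ1⟩, rfl⟩
    exact ⟨σ * (1 - τ), σ * τ, mul_nonneg hσ0 (by linarith), by positivity, by linarith, by module⟩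
  · rintro ⟨s, t, hs, ht, hst, rfl⟩
    refine mem_convexHull_of_exists_fintype ![1 - s - t, s, t] ![A, A + u, A + v] ?_ ?_ ?_ ?_
    · simpa [Fin.forall_fin_succ, hs, ht, le_sub_iff_add_le'] using hst
    · simp [Fin.sum_univ_succ]
    · simp [Fin.forall_fin_succ]
    · simp only [Fin.sum_univ_three, Matrix.cons_val]
      module

lemma exists_nat_mem_Icc {x : ℝ} {k : ℕ} (hk : 0 < k) (hx : x ∈ Icc (0 : ℝ) k) :
    ∃ n < k, x ∈ Icc (n : ℝ) (n + 1) := by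
  obtain ⟨hx0, hxk⟩ := hx
  rcases hxk.lt_or_eq with hxk | rfl
  · exact ⟨⌊x⌋₊, (Nat.floor_lt hx0).2 hxk, Nat.floor_le hx0, (Nat.lt_floor_add_one x).le⟩
  · exact ⟨k - 1, by omega, by simp [Nat.cast_pred hk]⟩

/-- The `i`-th strip of the family of parallel strips whose boundary lines pass through the points
`O + i • z` in the direction `w`. -/
def strip {V : Type*} [AddCommGroup V] [Module ℝ V] (O z w : V) (i : ℕ) : Set V :=
  {x | ∃ r ∈ Icc (i : ℝ) (i + 1), ∃ q : ℝ, x = O + r • z + q • w}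

/-- The cell of the triangular grid spanned by `u` and `v` at `O` that lies in the `i`-th, `j`-th
and `l`-th strip of the three directions of grid lines. It is a triangle if `l = i + j` (same
orientation as `O, O + u, O + v`) or `l = i + j + 1` (opposite orientation) and has empty interior
for all other `l`. -/
def gridCell {V : Type*} [AddCommGroup V] [Module ℝ V] (O u v : V) (i j l : ℕ) : Set V :=
  {x | ∃ s ∈ Icc (i : ℝ) (i + 1), ∃ t ∈ Icc (j : ℝ) (j + 1), s + t ∈ Icc (l : ℝ) (l + 1) ∧
    x = O + s • u + t • v}

/-- The `k ^ 2` cells of the grid triangle `O, O + k • u, O + k • v`, indexed by pairs of numbers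
`x, y < k`: the pairs with `x ≤ y` give the cells with the orientation of the triangle, those with
`y < x` the cells with the opposite orientation. -/
def gridTile {V : Type*} [AddCommGroup V] [Module ℝ V] (O u v : V) (x y : ℕ) : Set V :=
  if x ≤ y then gridCell O u v x (y - x) y else gridCell O u v y (x - y - 1) x

section Interiors

variable {V : Type*} [NormedAddCommGroup V] [NormedSpace ℝ V] [FiniteDimensional ℝ V]

lemma disjoint_interior_strip (hV : 1 < Module.finrank ℝ V) (O z w : V) {i i' : ℕ} (h : i ≠ i') :
    Disjoint (interior (strip O z w i)) (interior (strip O z w i')) := by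
  wlog hlt : i < i' generalizing i i'
  · exact (this h.symm (h.lt_or_gt.resolve_left hlt)).symm
  obtain ⟨f, hf, hw, hz⟩ := exists_ne_zero_apply_eq_zero_nonneg hV w z
  have hle : (i + 1 : ℝ) ≤ i' := by exact_mod_cast hlt
  refine disjoint_interior_of_le_of_ge hf (c := f O + (i + 1) * f z) ?_ ?_
  · rintro _ ⟨r, hr, q, rfl⟩
    simpa [hw] using mul_le_mul_of_nonneg_right hr.2 hz
  · rintro _ ⟨r, hr, q, rfl⟩
    simpa [hw] using mul_le_mul_of_nonneg_right (hle.trans hr.1) hz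

lemma disjoint_interior_gridCell (hV : 1 < Module.finrank ℝ V) (O u v : V) {i j l i' j' l' : ℕ}
    (h : i ≠ i' ∨ j ≠ j' ∨ l ≠ l') :
    Disjoint (interior (gridCell O u v i j l)) (interior (gridCell O u v i' j' l')) := by
  have hi (i j l) : gridCell O u v i j l ⊆ strip O u v i := by
    rintro _ ⟨s, hs, t, -, -, rfl⟩
    exact ⟨s, hs, t, rfl⟩
  have hj (i j l) : gridCell O u v i j l ⊆ strip O v u j := by
    rintro _ ⟨s, -, t, ht, -, rfl⟩
    exact ⟨t, ht, s, by module⟩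
  have hl (i j l) : gridCell O u v i j l ⊆ strip O u (v - u) l := by
    rintro _ ⟨s, -, t, -, hst, rfl⟩
    exact ⟨s + t, hst, t, by module⟩
  rcases h with h | h | h
  · exact (disjoint_interior_strip hV O u v h).mono (interior_mono (hi ..)) (interior_mono (hi ..))
  · exact (disjoint_interior_strip hV O v u h).mono (interior_mono (hj ..)) (interior_mono (hj ..))
  · exact (disjoint_interior_strip hV O u (v - u) h).mono
      (interior_mono (hl ..)) (interior_mono (hl ..))

lemma disjoint_interior_gridTile (hV : 1 < Module.finrank ℝ V) (O u v : V) {x y x' y' : ℕ}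
    (h : x ≠ x' ∨ y ≠ y') :
    Disjoint (interior (gridTile O u v x y)) (interior (gridTile O u v x' y')) := by
  unfold gridTile
  split_ifs <;> exact disjoint_interior_gridCell hV O u v (by omega)

end Interiors

section Cells

variable {V : Type*} [AddCommGroup V] [Module ℝ V] (O u v : V)

lemma gridCell_add (i j : ℕ) :
    gridCell O u v i j (i + j) = convexHull ℝ {O + (i : ℝ) • u + (j : ℝ) • v,
      O + (i : ℝ) • u + (j : ℝ) • v + u, O + (i : ℝ) • u + (j : ℝ) • v + v} := by
  ext x
  simp only [gridCell, mem_convexHull_triple, mem_ofPred_eq, mem_Icc]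
  push_cast
  constructor
  · rintro ⟨s, hs, t, ht, hst, rfl⟩
    exact ⟨s - i, t - j, by linarith, by linarith, by linarith, by module⟩
  · rintro ⟨s, t, hs, ht, hst, rfl⟩
    exact ⟨i + s, by constructor <;> linarith, j + t, by constructor <;> linarith,
      by constructor <;> linarith, by module⟩

lemma gridCell_add_add_one (i j : ℕ) :
    gridCell O u v i j (i + j + 1) = convexHull ℝ {O + (i + 1 : ℝ) • u + (j + 1 : ℝ) • v,
      O + (i + 1 : ℝ) • u + (j + 1 : ℝ) • v + -u, O + (i + 1 : ℝ) • u + (j + 1 : ℝ) • v + -v} := by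
  ext x
  simp only [gridCell, mem_convexHull_triple, mem_ofPred_eq, mem_Icc]
  push_cast
  constructor
  · rintro ⟨s, hs, t, ht, hst, rfl⟩
    exact ⟨i + 1 - s, j + 1 - t, by linarith, by linarith, by linarith, by module⟩
  · rintro ⟨s, t, hs, ht, hst, rfl⟩
    exact ⟨i + 1 - s, by constructor <;> linarith, j + 1 - t, by constructor <;> linarith,
      by constructor <;> linarith, by module⟩

lemma exists_mem_gridCell {k : ℕ} (hk : 0 < k) {s t : ℝ} (hs : 0 ≤ s) (ht : 0 ≤ t)
    (hst : s + t ≤ k) : ∃ i j l : ℕ, l < k ∧ (l = i + j ∨ l = i + j + 1) ∧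
      O + s • u + t • v ∈ gridCell O u v i j l := by
  obtain ⟨l, hlk, hl⟩ := exists_nat_mem_Icc hk (x := s + t) ⟨by positivity, hst⟩
  obtain ⟨i, hil, hi⟩ := exists_nat_mem_Icc l.succ_pos (x := s)
    ⟨hs, by push_cast; linarith [hl.2]⟩
  obtain ⟨d, rfl⟩ := Nat.exists_eq_add_of_le (Nat.lt_succ_iff.1 hil)
  push_cast [mem_Icc] at hi hl
  rcases le_total (d : ℝ) t with hdt | hdt
  · exact ⟨i, d, i + d, hlk, .inl rfl, s, hi, t, ⟨hdt, by linarith⟩, by simpa using hl, rfl⟩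
  · cases d with
    | zero =>
      exact ⟨i, 0, i + 0, hlk, .inl rfl, s, hi, t, ⟨by simpa using ht, by linarith⟩,
        by simpa using hl, rfl⟩
    | succ j =>
      push_cast at hdt hl
      exact ⟨i, j, i + (j + 1), hlk, .inr rfl, s, hi, t, ⟨by linarith, hdt⟩,
        by push_cast; exact hl, rfl⟩

lemma gridCell_subset_convexHull {i j l k : ℕ} (hl : l < k) :
    gridCell O u v i j l ⊆ convexHull ℝ {O, O + (k : ℝ) • u, O + (k : ℝ) • v} := by
  have hlk : (l + 1 : ℝ) ≤ k := by exact_mod_cast hl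
  have hk : (0 : ℝ) < k := by exact_mod_cast l.zero_le.trans_lt hl
  rintro _ ⟨s, hs, t, ht, hst, rfl⟩
  have hs0 : 0 ≤ s := i.cast_nonneg.trans hs.1
  have ht0 : 0 ≤ t := j.cast_nonneg.trans ht.1
  refine mem_convexHull_triple.2 ⟨s / k, t / k, by positivity, by positivity, ?_, ?_⟩
  · rw [← add_div, div_le_one hk]
    exact hst.2.trans hlk
  · simp only [smul_smul, div_mul_cancel₀ _ hk.ne']

lemma convexHull_eq_iUnion_gridTile {k : ℕ} (hk : 0 < k) :
    convexHull ℝ {O, O + (k : ℝ) • u, O + (k : ℝ) • v} =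
      ⋃ n : Fin k × Fin k, gridTile O u v n.1 n.2 := by
  refine Subset.antisymm (fun x hx ↦ ?_) (iUnion_subset fun ⟨x, y⟩ ↦ ?_)
  · obtain ⟨s, t, hs, ht, hst, rfl⟩ := mem_convexHull_triple.1 hx
    obtain ⟨i, j, l, hl, rfl | rfl, hmem⟩ := exists_mem_gridCell O u v hk
      (s := s * k) (t := t * k) (by positivity) (by positivity)
      (by simpa [add_mul] using mul_le_mul_of_nonneg_right hst k.cast_nonneg)
    all_goals rw [mul_smul, mul_smul] at hmem
    · exact mem_iUnion.2 ⟨(⟨i, by omega⟩, ⟨i + j, hl⟩), by simpa [gridTile] using hmem⟩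
    · refine mem_iUnion.2 ⟨(⟨i + j + 1, hl⟩, ⟨i, by omega⟩), ?_⟩
      rw [gridTile, if_neg (by dsimp only; omega)]
      convert hmem using 1
      congr 1; dsimp only; omega
  · unfold gridTile
    split_ifs
    · exact gridCell_subset_convexHull O u v y.2
    · exact gridCell_subset_convexHull O u v x.2

end Cells

lemma isTriangle_gridTile {p q r : ℝ} {O u v : Plane} (hp : ‖u - v‖ = p) (hq : ‖v‖ = q)
    (hr : ‖u‖ = r) (x y : ℕ) : IsTriangle p q r (gridTile O u v x y) := by
  have hcell (A : Plane) {u v : Plane} (hp : ‖u - v‖ = p) (hq : ‖v‖ = q) (hr : ‖u‖ = r) :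
      IsTriangle p q r (convexHull ℝ {A, A + u, A + v}) :=
    ⟨A, A + u, A + v, by simpa [dist_eq_norm] using hp, by simpa using hq, by simpa using hr, rfl⟩
  unfold gridTile
  split_ifs with hxy
  · obtain ⟨j, rfl⟩ := Nat.exists_eq_add_of_le hxy
    rw [Nat.add_sub_cancel_left, gridCell_add]
    exact hcell _ hp hq hr
  · obtain ⟨j, rfl⟩ := Nat.exists_eq_add_of_lt (not_le.1 hxy)
    rw [show y + j + 1 - y - 1 = j by omega, gridCell_add_add_one]
    exact hcell _ (by rw [neg_sub_neg, norm_sub_rev, hp]) (by rwa [norm_neg]) (by rwa [norm_neg])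

lemma IsTriangle.tilesInto_sq {p q r : ℝ} {Δ : Set Plane} {k : ℕ} (hk : 0 < k)
    (h : IsTriangle (k * p) (k * q) (k * r) Δ) : TilesInto Δ (k ^ 2) p q r := by
  obtain ⟨P, Q, R, hp, hq, hr, rfl⟩ := h
  have hk' : (k : ℝ) ≠ 0 := by positivity
  have hnorm {x : Plane} {d : ℝ} (hx : ‖x‖ = k * d) : ‖(k : ℝ)⁻¹ • x‖ = d := by
    rw [norm_smul, hx, norm_inv, RCLike.norm_natCast, inv_mul_cancel_left₀ hk']
  let u : Plane := (k : ℝ)⁻¹ • (Q - P)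
  let v : Plane := (k : ℝ)⁻¹ • (R - P)
  have hu : ‖u‖ = r := hnorm (by rw [← dist_eq_norm, dist_comm, hr])
  have hv : ‖v‖ = q := hnorm (by rw [← dist_eq_norm, dist_comm, hq])
  have huv : ‖u - v‖ = p := by
    rw [← smul_sub, sub_sub_sub_cancel_right]
    exact hnorm (by rw [← dist_eq_norm, hp])
  have hPQR : convexHull ℝ {P, Q, R} = ⋃ n : Fin k × Fin k, gridTile P u v n.1 n.2 := by
    simpa [u, v, smul_inv_smul₀ hk'] using convexHull_eq_iUnion_gridTile P u v hk
  have htile := isTriangle_gridTile (O := P) huv hv hu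
  have := TilesInto.of_iUnion (htile 0 0) (fun n : Fin k × Fin k ↦ gridTile P u v n.1 n.2)
    (fun n ↦ htile n.1 n.2) fun n n' hn ↦
    disjoint_interior_gridTile one_lt_finrank_plane P u v <| by
      simpa only [ne_eq, Prod.ext_iff, Fin.ext_iff, not_and_or] using hn
  rwa [← hPQR, Fintype.card_prod, Fintype.card_fin, ← sq] at this

end TriangularGrid

lemma dist_pt (x y x' y' : ℝ) : dist (pt x y) (pt x' y') = √((x - x') ^ 2 + (y - y') ^ 2) := by
  simp [pt, EuclideanSpace.dist_eq, Real.dist_eq, sq_abs]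

lemma isTriangle_equilateralTri {X : ℝ} (hX : 0 ≤ X) : IsTriangle X X X (EquilateralTri X) := by
  have h3 : √3 ^ 2 = 3 := Real.sq_sqrt zero_le_three
  refine ⟨_, _, _, ?_, ?_, ?_, rfl⟩ <;> rw [dist_pt, Real.sqrt_eq_iff_eq_sq (by positivity) hX]
  · linear_combination X ^ 2 / 4 * h3
  · linear_combination X ^ 2 / 4 * h3
  · ring

lemma TilesInto.of_equilateralTri {a b c : ℝ} {n N : ℕ} {Δ : Set Plane}
    (ha : 0 < a) (hb : 0 < b) (h : c ^ 2 = a ^ 2 + b ^ 2 + a * b) (hn : 0 < n)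
    (heq : TilesInto (EquilateralTri (n * a)) N a b c)
    (hΔ : IsTriangle (n * c) (n * (a + b)) (n * a) Δ) : TilesInto Δ (N + n ^ 2) a b c := by
  obtain ⟨E, R, Q, hRQ, hEQ, hER, rfl⟩ := hΔ
  obtain ⟨F, hF, hEF, hFQ, hRF⟩ := exists_wbtw_dist_eq (B := R) (x := n * a) (y := n * b)
    (z := n * a) (by positivity) (by positivity) (by positivity) (by rw [hEQ, mul_add])
    (by rw [dist_comm, hER, hRQ]; linear_combination (n ^ 3 * a) * h)
  have hERF : IsTriangle (n * a) (n * a) (n * a) (convexHull ℝ {E, R, F}) :=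
    ⟨E, R, F, hRF, hEF, hER, rfl⟩
  have hFRQ : IsTriangle (n * c) (n * b) (n * a) (convexHull ℝ {F, R, Q}) :=
    ⟨F, R, Q, hRQ, hFQ, by rw [dist_comm, hRF], rfl⟩
  exact .convexHull_of_wbtw hF
    (heq.of_isTriangle (isTriangle_equilateralTri (by positivity)) hERF)
    (hFRQ.rotate.swap.tilesInto_sq hn)

theorem stmt18_general {a b c m : ℝ} {n k N : ℕ} {Δ : Set Plane} (ha : 0 < a) (hb : 0 < b)
    (hm : 0 < m) (h : c ^ 2 = a ^ 2 + b ^ 2 + a * b) (hn : n = m * b) (hk : k = m * (a + b))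
    (heq : TilesInto (EquilateralTri (m * a * b)) N a b c)
    (hΔ : IsTriangle (m * b * c) (m * a * (a + 2 * b)) (m * c * (a + b)) Δ) :
    TilesInto Δ (k ^ 2 + (N + n ^ 2)) a b c := by
  have hn0 : 0 < n := Nat.cast_pos.1 (hn ▸ by positivity : (0 : ℝ) < n)
  have hk0 : 0 < k := Nat.cast_pos.1 (hk ▸ by positivity : (0 : ℝ) < k)
  obtain ⟨P, Q, R, hQR, hPR, hPQ, rfl⟩ := hΔ
  obtain ⟨E, hE, hPE, hER, hQE⟩ := exists_wbtw_dist_eq (B := Q) (x := k * a) (y := n * a)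
    (z := k * b) (by positivity) (by positivity) (by positivity) (by rw [hPR, hk, hn]; ring)
    (by rw [dist_comm, hPQ, hQR, hk, hn]
        linear_combination (m ^ 3 * a * b * (a + b) * (a + 2 * b)) * h)
  have hPQE : IsTriangle (k * b) (k * a) (k * c) (convexHull ℝ {P, Q, E}) :=
    ⟨P, Q, E, hQE, hPE, by rw [hPQ, hk]; ring, rfl⟩
  have hEQR : IsTriangle (n * c) (n * a) (n * (a + b)) (convexHull ℝ {E, Q, R}) :=
    ⟨E, Q, R, by rw [hQR, hn], hER, by rw [dist_comm, hQE, hk, hn]; ring, rfl⟩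
  have heq' : TilesInto (EquilateralTri (n * a)) N a b c := by rwa [hn, mul_right_comm]
  exact .convexHull_of_wbtw hE (hPQE.swap.tilesInto_sq hk0)
    (heq'.of_equilateralTri ha hb h hn0 hEQR.swap.rotate)

theorem stmt18 (a b c : ℕ) (ha : 0 < a) (hb : 0 < b) (hc : 0 < c)
    (hab : Nat.Coprime a b) (hac : Nat.Coprime a c) (hbc : Nat.Coprime b c)
    (h : c ^ 2 = a ^ 2 + b ^ 2 + a * b) (m : ℕ) (hm : 0 < m)
    (heq : TilesInto (EquilateralTri ((m : ℝ) * a * b)) (m ^ 2 * a * b) a b c) :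
    ∀ Δ : Set Plane,
      IsTriangle ((m : ℝ) * b * c) ((m : ℝ) * a * (a + 2 * b)) ((m : ℝ) * c * (a + b)) Δ →
      TilesInto Δ (m ^ 2 * (a + 2 * b) * (a + b)) a b c := by
  intro Δ hΔ
  convert stmt18_general (n := m * b) (k := m * (a + b)) (Nat.cast_pos.2 ha) (Nat.cast_pos.2 hb)
    (Nat.cast_pos.2 hm) (by exact_mod_cast h) (by push_cast; rfl) (by push_cast; rfl) heq hΔ using 1
  ring
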